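/- In the setting of the Select iteration, let u := y*_{i_u} and v := y*_{i_v} be the i_u-th and i_v-th order statistics of the random sample S of size s from S₊ of size s₊, where i_u := max{⌈θs−g⌉,1}, i_v := min{⌈θs+g⌉,s}, and let c be the number of comparisons made when partitioning the s₊ − s elements of S₊ \ S against u and v (each element compared first to v if θ < 1/2, else first to u, and to the other pivot only when needed). Let c̄ := (1 + min{θ, 1−θ})(s₊ − s) + 3g·s₊/s. Then P[c < c̄] ≥ 1 − exp(−2g²/s) and E[c] ≤ c̄ + 2(s₊ − s)·exp(−2g²/s). -/

import Mathlib

/-- The `i`-th smallest element (1-based) of a multiset of reals. -/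
noncomputable def kthSmallest (M : Multiset ℝ) (i : ℕ) : ℝ :=
  (M.sort (· ≤ ·)).getD (i - 1) 0

lemma bern_mgf (p l : ℝ) (hp0 : 0 ≤ p) (hp1 : p ≤ 1) :
    1 - p + p * Real.exp l ≤ Real.exp (p * l + l ^ 2 / 8) := by
  let m : MeasureTheory.Measure Bool :=
    ENNReal.ofReal p • MeasureTheory.Measure.dirac true
      + ENNReal.ofReal (1 - p) • MeasureTheory.Measure.dirac false
  have key : ∀ f : Bool → ℝ, ∫ a, f a ∂m = p * f true + (1 - p) * f false := by
    intro f
    rw [MeasureTheory.integral_add_measure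
        (MeasureTheory.Integrable.smul_measure .of_finite ENNReal.ofReal_ne_top)
        (MeasureTheory.Integrable.smul_measure .of_finite ENNReal.ofReal_ne_top),
      MeasureTheory.integral_smul_measure, MeasureTheory.integral_smul_measure]
    simp [hp0, hp1]
  have : MeasureTheory.IsProbabilityMeasure m := by
    constructor
    simp [m]
    rw [← ENNReal.ofReal_add hp0 (by linarith)]
    simp
  let X : Bool → ℝ := fun b => if b then 1 - p else - p
  have h := ProbabilityTheory.hasSubgaussianMGF_of_mem_Icc_of_integral_eq_zero (μ := m) (X := X)
    (a := -p) (b := 1 - p) (by fun_prop) (by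
      refine Filter.Eventually.of_forall fun b => ?_
      cases b <;> simp [X]) (by rw [key]; simp [X]; ring)
  have h2 := h.mgf_le l
  unfold ProbabilityTheory.mgf at h2
  rw [key] at h2
  simp only [X, sub_neg_eq_add, sub_add_cancel, if_true] at h2
  simp at h2
  have e1 : Real.exp (l * (1 - p)) = Real.exp l * Real.exp (-(l*p)) := by
    rw [← Real.exp_add]; ring_nf
  rw [e1] at h2
  have e2 : Real.exp (p * l + l ^ 2 / 8) = Real.exp ((2 ^ 2)⁻¹ * l ^ 2 / 2) * Real.exp (l * p) := by
    rw [← Real.exp_add]; ring_nf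
  have e3 : Real.exp (-(l*p)) * Real.exp (l * p) = 1 := by
    rw [← Real.exp_add]; simp
  rw [e2]
  refine le_trans (le_of_eq ?_) (mul_le_mul_of_nonneg_right h2 (Real.exp_pos _).le)
  linear_combination (-(p * Real.exp l + (1-p))) * e3

lemma choose_ratio (b n i : ℕ) (hbn : b ≤ n) :
    b.choose i * n ^ i ≤ n.choose i * b ^ i := by
  have h : ∀ i, b.descFactorial i * n ^ i ≤ n.descFactorial i * b ^ i := by
    intro i
    induction i with
    | zero => simp
    | succ i ih =>
      rw [Nat.descFactorial_succ, Nat.descFactorial_succ, pow_succ, pow_succ]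
      have h1 : (b - i) * n ≤ (n - i) * b := by
        rw [Nat.sub_mul, Nat.sub_mul, mul_comm n b]
        exact Nat.sub_le_sub_left (Nat.mul_le_mul_left i hbn) _
      calc _ = ((b - i) * n) * (b.descFactorial i * n ^ i) := by ring
        _ ≤ ((n - i) * b) * (n.descFactorial i * b ^ i) := Nat.mul_le_mul h1 ih
        _ = _ := by ring
  have := h i
  rw [Nat.descFactorial_eq_factorial_mul_choose, Nat.descFactorial_eq_factorial_mul_choose,
    mul_assoc, mul_assoc] at this
  exact Nat.le_of_mul_le_mul_left this (Nat.factorial_pos i)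

lemma card_superset (n s : ℕ) (I : Finset (Fin n)) (hI : I.card ≤ s) :
    (((Finset.univ : Finset (Fin n)).powersetCard s).filter (fun S => I ⊆ S)).card
      = (n - I.card).choose (s - I.card) := by
  have : n - I.card = (Finset.univ \ I).card := by
    rw [Finset.card_sdiff_of_subset (Finset.subset_univ _)]; simp
  rw [this, ← Finset.card_powersetCard]
  refine Finset.card_bij' (fun S _ => S \ I) (fun S _ => S ∪ I) ?_ ?_ ?_ ?_
  · intro S hS
    simp only [Finset.mem_filter, Finset.mem_powersetCard] at hS ⊢
    refine ⟨Finset.sdiff_subset_sdiff (Finset.subset_univ _) subset_rfl, ?_⟩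
    rw [Finset.card_sdiff_of_subset hS.2, hS.1.2]
  · intro S hS
    simp only [Finset.mem_filter, Finset.mem_powersetCard] at hS ⊢
    refine ⟨⟨Finset.subset_univ _, ?_⟩, Finset.subset_union_right⟩
    rw [Finset.card_union_of_disjoint, hS.2]
    · omega
    · exact Finset.disjoint_of_subset_left hS.1 Finset.sdiff_disjoint
  · intro S hS
    simp only [Finset.mem_filter, Finset.mem_powersetCard] at hS
    exact Finset.sdiff_union_of_subset hS.2
  · intro S hS
    simp only [Finset.mem_powersetCard] at hS
    rw [Finset.union_sdiff_right]
    exact Finset.sdiff_eq_self_of_disjoint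
      (Finset.disjoint_of_subset_left hS.1 Finset.sdiff_disjoint)

lemma hyper_mgf (n s : ℕ) (hsn : s ≤ n) (hn : 0 < n) (B : Finset (Fin n)) (y : ℝ) (hy : 0 ≤ y) :
    ∑ S ∈ (Finset.univ : Finset (Fin n)).powersetCard s, (1 + y) ^ (S ∩ B).card
      ≤ (n.choose s : ℝ) * (1 + (B.card / n : ℝ) * y) ^ s := by
  have e1 : ∀ S : Finset (Fin n), (1 + y) ^ (S ∩ B).card
      = ∑ I ∈ B.powerset, if I ⊆ S then y ^ I.card else 0 := by
    intro S
    rw [← Finset.sum_filter]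
    have : B.powerset.filter (fun I => I ⊆ S) = (S ∩ B).powerset := by
      ext I; rw [Finset.mem_filter, Finset.mem_powerset, Finset.mem_powerset, Finset.subset_inter_iff, and_comm]
    rw [this]
    have := Finset.sum_pow_mul_eq_add_pow y 1 (S ∩ B)
    simp only [one_pow, mul_one] at this
    rw [this, add_comm]
  simp_rw [e1]
  rw [Finset.sum_comm]
  have e2 : ∀ I ∈ B.powerset, (∑ S ∈ (Finset.univ : Finset (Fin n)).powersetCard s,
      if I ⊆ S then y ^ I.card else 0) =
      (if I.card ≤ s then ((n - I.card).choose (s - I.card) : ℝ) * y ^ I.card else 0) := by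
    intro I _
    rw [← Finset.sum_filter, Finset.sum_const, nsmul_eq_mul]
    split_ifs with h
    · rw [card_superset n s I h]
    · rw [Finset.filter_false_of_mem]; · simp
      intro S hS hIS
      rw [Finset.mem_powersetCard] at hS
      exact h (hS.2 ▸ Finset.card_le_card hIS)
  rw [Finset.sum_congr rfl e2,
    Finset.sum_powerset_apply_card (fun i => if i ≤ s then ((n - i).choose (s - i) : ℝ) * y ^ i else 0)]
  have hb : B.card ≤ n := by simpa using Finset.card_le_univ B
  rw [add_comm 1, add_pow, Finset.mul_sum]
  have hn' : (0:ℝ) < n := by exact_mod_cast hn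
  have e3 : ∑ i ∈ Finset.range (B.card + 1),
      B.card.choose i • (if i ≤ s then ((n - i).choose (s - i) : ℝ) * y ^ i else 0)
      ≤ ∑ i ∈ Finset.range (n + 1),
      B.card.choose i • (if i ≤ s then ((n - i).choose (s - i) : ℝ) * y ^ i else 0) := by
    apply Finset.sum_le_sum_of_subset_of_nonneg
    · intro i; simp; omega
    · intros; positivity
  refine e3.trans ?_
  have e4 : ∑ i ∈ Finset.range (n + 1),
      B.card.choose i • (if i ≤ s then ((n - i).choose (s - i) : ℝ) * y ^ i else 0)
      = ∑ i ∈ Finset.range (s + 1),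
      B.card.choose i • (((n - i).choose (s - i) : ℝ) * y ^ i) := by
    symm
    apply Finset.sum_subset_zero_on_sdiff
    · intro i; simp; omega
    · intro i hi; simp at hi; rw [if_neg (by omega)]; simp
    · intro i hi; simp at hi; rw [if_pos (by omega)]
  rw [e4]
  apply Finset.sum_le_sum
  intro i hi
  have his : i ≤ s := by simp at hi; omega
  rw [nsmul_eq_mul, mul_pow, div_pow, one_pow, mul_one]
  have c1 : (n.choose s : ℝ) * s.choose i = n.choose i * (n - i).choose (s - i) := by
    exact_mod_cast Nat.choose_mul his
  have c2 : (B.card.choose i : ℝ) * n ^ i ≤ n.choose i * B.card ^ i := by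
    exact_mod_cast choose_ratio B.card n i hb
  have c3 : (B.card.choose i : ℝ) ≤ n.choose i * (B.card ^ i / n ^ i) := by
    rw [← mul_div_assoc, le_div_iff₀ (by positivity)]; exact c2
  calc _ ≤ (n.choose i * (B.card ^ i / n ^ i) : ℝ) * (((n - i).choose (s - i) : ℝ) * y ^ i) :=
        mul_le_mul_of_nonneg_right c3 (by positivity)
    _ = (n.choose i * (n - i).choose (s - i)) * ((B.card ^ i / n ^ i : ℝ) * y ^ i) := by ring
    _ = _ := by rw [← c1]; ring

lemma hyper_tail (n s : ℕ) (hs : 0 < s) (hsn : s ≤ n) (A : Finset (Fin n)) (g : ℝ) (hg : 0 ≤ g) :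
    ((((Finset.univ : Finset (Fin n)).powersetCard s).filter
      (fun S => ((S ∩ A).card : ℝ) ≤ A.card * s / n - g)).card : ℝ)
      ≤ n.choose s * Real.exp (-2 * g ^ 2 / s) := by
  set l : ℝ := 4 * g / s with hl
  have hs' : (0:ℝ) < s := by exact_mod_cast hs
  have hn' : (0:ℝ) < n := by exact_mod_cast lt_of_lt_of_le hs hsn
  have hl0 : 0 ≤ l := by positivity
  have hbc : ((Aᶜ).card : ℝ) = n - A.card := by
    rw [Finset.card_compl, Nat.cast_sub (Finset.card_le_univ A)]; simp
  set p : ℝ := (Aᶜ).card / n with hp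
  have hp0 : 0 ≤ p := by positivity
  have hp1 : p ≤ 1 := by
    rw [hp, div_le_one hn']
    exact_mod_cast (by simpa using Finset.card_le_univ Aᶜ)
  have h1 := hyper_mgf n s hsn (by omega) Aᶜ (Real.exp l - 1)
    (by linarith [Real.add_one_le_exp l])
  rw [← hp] at h1
  have h2 : (1 + p * (Real.exp l - 1)) ^ s ≤ Real.exp (s * (p * l + l ^ 2 / 8)) := by
    rw [Real.exp_nat_mul]
    apply pow_le_pow_left₀
    · nlinarith [Real.add_one_le_exp l]
    · have := bern_mgf p l hp0 hp1; linarith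
  have h3 : ((((Finset.univ : Finset (Fin n)).powersetCard s).filter
      (fun S => ((S ∩ A).card : ℝ) ≤ A.card * s / n - g)).card : ℝ) * Real.exp (l * (s * p + g))
      ≤ ∑ S ∈ (Finset.univ : Finset (Fin n)).powersetCard s,
        (1 + (Real.exp l - 1)) ^ (S ∩ Aᶜ).card := by
    rw [← nsmul_eq_mul, ← Finset.sum_const]
    refine le_trans (Finset.sum_le_sum ?_) (Finset.sum_le_sum_of_subset_of_nonneg
      (Finset.filter_subset _ _) ?_)
    · intro S hS
      simp only [Finset.mem_filter, Finset.mem_powersetCard] at hS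
      rw [add_sub_cancel, ← Real.exp_nat_mul, Real.exp_le_exp, mul_comm]
      apply mul_le_mul_of_nonneg_right _ hl0
      have hc : ((S ∩ A).card : ℝ) + (S ∩ Aᶜ).card = s := by
        have := Finset.card_inter_add_card_sdiff S A
        rw [Finset.sdiff_eq_inter_compl, hS.1.2] at this
        exact_mod_cast this
      have : s * p = s - A.card * s / n := by
        rw [hp, hbc]; field_simp
      linarith [hS.2]
    · intros; rw [add_sub_cancel]; positivity
  have h4 := h3.trans (h1.trans (mul_le_mul_of_nonneg_left h2 (by positivity)))
  rw [← le_div_iff₀ (Real.exp_pos _), mul_div_assoc (n.choose s : ℝ), ← Real.exp_sub] at h4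
  have e5 : (s : ℝ) * (p * l + l ^ 2 / 8) - l * (s * p + g) = -2 * g ^ 2 / s := by
    rw [hl]; field_simp; ring
  rwa [e5] at h4

lemma bad_bound (n s : ℕ) (hs : 0 < s) (hsn : s < n) (x : Fin n → ℝ) (g T : ℝ) (hg : 0 ≤ g)
    (k : ℕ) (hk : k < s) (hkT : (k : ℝ) ≤ (k + T) * s / n - g)
    (f : Finset (Fin n) → ℝ)
    (hf : ∀ S ∈ (Finset.univ : Finset (Fin n)).powersetCard s,
      (S.filter (fun i => x i < f S)).card ≤ k) :
    ((((Finset.univ : Finset (Fin n)).powersetCard s).filter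
      (fun S => T ≤ (((Finset.univ \ S).filter (fun i => x i < f S)).card : ℝ))).card : ℝ)
      ≤ n.choose s * Real.exp (-2 * g ^ 2 / s) := by
  have hn' : (0:ℝ) < n := by exact_mod_cast lt_trans hs hsn
  by_cases hj : k + ⌈T⌉₊ ≤ n
  · set j := k + ⌈T⌉₊ with hjdef
    let σ := Tuple.sort x
    have hσ : Monotone (x ∘ σ) := Tuple.monotone_sort x
    let A : Finset (Fin n) := Finset.univ.filter (fun i => ((σ.symm i : Fin n) : ℕ) < j)
    have hA : A.card = j := by
      have : A = (Finset.univ.filter (fun i : Fin n => (i : ℕ) < j)).map σ.toEmbedding := by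
        ext i; simp [A]
      rw [this, Finset.card_map, Fin.card_filter_val_lt]; omega
    have hsub : ∀ w : ℝ, A ⊆ Finset.univ.filter (fun i => x i < w) ∨
        Finset.univ.filter (fun i => x i < w) ⊆ A := by
      intro w
      by_contra! hcon
      obtain ⟨⟨a, ha, ha'⟩, ⟨b, hb, hb'⟩⟩ := And.imp Finset.not_subset.1 Finset.not_subset.1 hcon
      simp [A] at ha ha' hb hb'
      have : x (σ (σ.symm a)) ≤ x (σ (σ.symm b)) := hσ (by rw [Fin.le_def]; omega)
      simp at this
      linarith
    refine le_trans ?_ (hyper_tail n s hs hsn.le A g hg)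
    refine Nat.cast_le.2 (Finset.card_le_card ?_)
    intro S hS
    rw [Finset.mem_filter] at hS ⊢
    refine ⟨hS.1, ?_⟩
    have hD := Nat.ceil_le.2 hS.2
    have hfS := hf S hS.1
    have hmain : (S ∩ A).card ≤ k := by
      set W := Finset.univ.filter (fun i => x i < f S) with hW
      have e1 : S.filter (fun i => x i < f S) = S ∩ W := by ext; simp [hW]
      have e2 : (Finset.univ \ S).filter (fun i => x i < f S) = W \ S := by
        ext; simp [hW, and_comm]
      rw [e1] at hfS
      rw [e2] at hD
      rcases hsub (f S) with h | h
      · exact (Finset.card_le_card (Finset.inter_subset_inter subset_rfl h)).trans hfS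
      · have c1 : (W \ S).card ≤ (A \ S).card :=
          Finset.card_le_card (Finset.sdiff_subset_sdiff h subset_rfl)
        have c2 := Finset.card_inter_add_card_sdiff A S
        rw [Finset.inter_comm] at c2
        omega
    have : ((S ∩ A).card : ℝ) ≤ k := by exact_mod_cast hmain
    refine this.trans (hkT.trans ?_)
    rw [hA, hjdef]
    push_cast
    gcongr
    exact Nat.le_ceil T
  · rw [Finset.filter_false_of_mem]
    · simp; positivity
    · intro S hS hT
      have hD := Nat.ceil_le.2 hT
      have c1 := Finset.card_le_card (Finset.filter_subset (fun i => x i < f S) (Finset.univ \ S))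
      rw [Finset.card_sdiff_of_subset (Finset.subset_univ _), (Finset.mem_powersetCard.1 hS).2] at c1
      simp at c1
      omega

lemma kth_lt (M : Multiset ℝ) (i : ℕ) (h1 : 1 ≤ i) (h2 : i ≤ M.card) :
    M.countP (fun a => a < kthSmallest M i) ≤ i - 1 := by
  unfold kthSmallest
  set L := M.sort (· ≤ ·) with hL
  have hM : M = (L : Multiset ℝ) := (Multiset.sort_eq M _).symm
  have hlen : L.length = M.card := Multiset.length_sort _
  have hp : L.Pairwise (· ≤ ·) := Multiset.pairwise_sort M _
  have hi : i - 1 < L.length := by omega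
  rw [List.getD_eq_getElem _ _ hi]
  conv_lhs => rw [hM]
  rw [Multiset.coe_countP]
  have hsplit := fun q : ℝ → Bool => List.countP_append (p := q) (l₁ := L.take (i-1)) (l₂ := L.drop (i-1))
  simp only [List.take_append_drop] at hsplit
  rw [hsplit]
  have h0 : (L.drop (i-1)).countP (fun a => decide (a < L[i-1])) = 0 := by
    rw [List.countP_eq_zero]
    intro a ha
    obtain ⟨m, hm, rfl⟩ := List.mem_iff_getElem.1 ha
    simp only [List.getElem_drop, decide_eq_true_eq, not_lt]
    rcases Nat.eq_zero_or_pos m with rfl | hm0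
    · simp
    · exact List.pairwise_iff_getElem.1 hp _ _ _ _ (by omega)
  have h3 : (L.take (i-1)).countP (fun a => decide (a < L[i-1])) ≤ i - 1 :=
    List.countP_le_length.trans (by simp)
  omega

lemma kth_gt (M : Multiset ℝ) (i : ℕ) (h1 : 1 ≤ i) (h2 : i ≤ M.card) :
    M.countP (fun a => kthSmallest M i < a) ≤ M.card - i := by
  unfold kthSmallest
  set L := M.sort (· ≤ ·) with hL
  have hM : M = (L : Multiset ℝ) := (Multiset.sort_eq M _).symm
  have hlen : L.length = M.card := Multiset.length_sort _
  have hp : L.Pairwise (· ≤ ·) := Multiset.pairwise_sort M _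
  have hi : i - 1 < L.length := by omega
  rw [List.getD_eq_getElem _ _ hi, ← hlen]
  conv_lhs => rw [hM]
  rw [Multiset.coe_countP]
  have hsplit := fun q : ℝ → Bool => List.countP_append (p := q) (l₁ := L.take (i)) (l₂ := L.drop (i))
  simp only [List.take_append_drop] at hsplit
  rw [hsplit]
  have h0 : (L.take i).countP (fun a => decide (L[i-1] < a)) = 0 := by
    rw [List.countP_eq_zero]
    intro a ha
    obtain ⟨m, hm, rfl⟩ := List.mem_iff_getElem.1 ha
    simp only [List.getElem_take, decide_eq_true_eq, not_lt]
    simp at hm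
    rcases Nat.lt_or_ge m (i-1) with h | h
    · exact List.pairwise_iff_getElem.1 hp _ _ _ _ h
    · have : m = i - 1 := by omega
      subst this; simp
  have h3 : (L.drop i).countP (fun a => decide (L[i-1] < a)) ≤ L.length - i :=
    List.countP_le_length.trans (by simp)
  omega

lemma card_filter_map {n : ℕ} (S : Finset (Fin n)) (x : Fin n → ℝ) (p : ℝ → Prop) [DecidablePred p] :
    (S.filter (fun i => p (x i))).card = (S.val.map x).countP p := by
  rw [Multiset.countP_map]; rfl

lemma arith_aux (t s n g k : ℝ) (hs : 0 < s) (hsn : s ≤ n) (hg : 0 ≤ g)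
    (h1 : t * s - g ≤ k) (h2 : k ≤ t * s + g) :
    k ≤ (k + (t * (n - s) + 3 * g * n / s)) * s / n - g := by
  have hn : 0 < n := by linarith
  have e : (k + (t * (n - s) + 3 * g * n / s)) * s / n
      = (k - (t * s - g)) * s / n + t * s + 3 * g - g * (s / n) := by
    field_simp; ring
  have h3 : 0 ≤ (k - (t * s - g)) * s / n :=
    div_nonneg (mul_nonneg (by linarith) hs.le) hn.le
  have h4 : s / n ≤ 1 := (div_le_one hn).2 hsn
  nlinarith

/-- Bound on the partitioning cost `c` of one Select iteration: with pivots
`u = y*_{i_u}`, `v = y*_{i_v}` from the random sample `S`, and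
`c̄ = (1 + min{θ,1−θ})(s₊−s) + 3g·s₊/s`, we have `P[c < c̄] ≥ 1 − exp(−2g²/s)`
and `E c ≤ c̄ + 2(s₊−s)·exp(−2g²/s)`. -/
theorem partition_cost_bound (s splus : ℕ) (hs : 0 < s) (hss : s < splus)
    (x : Fin splus → ℝ) (θ g : ℝ) (hθ : θ ∈ Set.Icc (0 : ℝ) 1) (hg : 0 ≤ g)
    (iu iv : ℕ) (hiu : (iu : ℤ) = max ⌈θ * (s : ℝ) - g⌉ 1)
    (hiv : (iv : ℤ) = min ⌈θ * (s : ℝ) + g⌉ (s : ℤ))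
    (cost : Finset (Fin splus) → ℕ)
    (hcost : ∀ S : Finset (Fin splus),
      cost S =
        (let u := kthSmallest (S.val.map x) iu
         let v := kthSmallest (S.val.map x) iv
         if u = v then splus - s
         else (splus - s) +
           (if θ < 1 / 2 then
              (((Finset.univ : Finset (Fin splus)) \ S).filter (fun j => x j < v)).card
            else
              (((Finset.univ : Finset (Fin splus)) \ S).filter (fun j => u < x j)).card)))
    (cbar : ℝ)
    (hcbar : cbar = (1 + min θ (1 - θ)) * ((splus : ℝ) - (s : ℝ))
        + 3 * g * (splus : ℝ) / (s : ℝ)) :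
    1 - Real.exp (-2 * g ^ 2 / (s : ℝ))
      ≤ ((((Finset.univ : Finset (Fin splus)).powersetCard s).filter
            (fun S => ((cost S : ℝ) < cbar))).card : ℝ)
          / ((((Finset.univ : Finset (Fin splus)).powersetCard s)).card : ℝ)
    ∧ (∑ S ∈ (Finset.univ : Finset (Fin splus)).powersetCard s, (cost S : ℝ))
          / ((((Finset.univ : Finset (Fin splus)).powersetCard s)).card : ℝ)
        ≤ cbar + 2 * ((splus : ℝ) - (s : ℝ)) * Real.exp (-2 * g ^ 2 / (s : ℝ)) := by
  
  obtain ⟨hθ0, hθ1⟩ := hθ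
  have hs' : (0:ℝ) < s := by exact_mod_cast hs
  have hss' : (s:ℝ) < splus := by exact_mod_cast hss
  have hn' : (0:ℝ) < splus := by linarith
  have hsub : ((splus - s : ℕ) : ℝ) = splus - s := by rw [Nat.cast_sub hss.le]
  have hcard : ((((Finset.univ : Finset (Fin splus)).powersetCard s)).card : ℝ)
      = splus.choose s := by simp
  have hC : (0:ℝ) < splus.choose s := by exact_mod_cast Nat.choose_pos hss.le
  have hmin : 0 ≤ min θ (1 - θ) := le_min hθ0 (by linarith)
  have hbad : ((((Finset.univ : Finset (Fin splus)).powersetCard s).filter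
            (fun S => ¬ ((cost S : ℝ) < cbar))).card : ℝ)
      ≤ splus.choose s * Real.exp (-2 * g ^ 2 / (s : ℝ)) := by
    rcases hg.eq_or_lt with rfl | hgpos
    · simp only [ne_eq, OfNat.ofNat_ne_zero, not_false_eq_true, zero_pow, mul_zero, zero_div,
        Real.exp_zero, mul_one]
      rw [← hcard]
      exact_mod_cast Finset.card_filter_le _ _
    have hcb : (splus : ℝ) - s < cbar := by
      rw [hcbar]
      have : 0 < 3 * g * (splus : ℝ) / (s : ℝ) := by positivity
      nlinarith
    have hiu1 : 1 ≤ iu := by omega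
    have hivs : iv ≤ s := by omega
    have hle : iu ≤ iv := by
      have c1 : ⌈θ * (s : ℝ) - g⌉ ≤ ⌈θ * (s : ℝ) + g⌉ := Int.ceil_le_ceil (by linarith)
      have c2 : ⌈θ * (s : ℝ) - g⌉ ≤ (s : ℤ) := by
        rw [Int.ceil_le]; push_cast; nlinarith
      have c3 : 0 < ⌈θ * (s : ℝ) + g⌉ := Int.ceil_pos.2 (by positivity)
      omega
    rcases hle.eq_or_lt with heq | hlt
    · rw [Finset.filter_false_of_mem]
      · simp; positivity
      · intro S _
        rw [not_not, hcost S, heq]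
        simpa [hsub] using hcb
    have hiulow : θ * s - g ≤ iu := by
      have : ⌈θ * (s : ℝ) - g⌉ ≤ (iu : ℤ) := by omega
      exact_mod_cast Int.ceil_le.1 this
    have hivup : ((iv : ℝ) - 1) ≤ θ * s + g := by
      have : (iv : ℤ) ≤ ⌈θ * (s : ℝ) + g⌉ := by omega
      have h2 : (iv : ℝ) ≤ ⌈θ * (s : ℝ) + g⌉ := by exact_mod_cast this
      linarith [Int.ceil_lt_add_one (θ * (s : ℝ) + g)]
    have hlt' : (iu : ℝ) + 1 ≤ iv := by exact_mod_cast hlt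
    by_cases hth : θ < 1 / 2
    · have hm : min θ (1 - θ) = θ := min_eq_left (by linarith)
      have hk1 : ((iv - 1 : ℕ) : ℝ) = iv - 1 := by
        rw [Nat.cast_sub (by omega)]; simp
      have hb := bad_bound splus s hs hss x g (θ * ((splus:ℝ) - s) + 3 * g * splus / s) hg (iv - 1)
        (by omega)
        (by rw [hk1]; exact arith_aux θ s splus g _ hs' hss'.le hg (by linarith) hivup)
        (fun S => kthSmallest (S.val.map x) iv) (by
          intro S hS
          rw [card_filter_map S x (fun a => a < kthSmallest (S.val.map x) iv)]
          exact kth_lt _ _ (by omega) (by simpa [(Finset.mem_powersetCard.1 hS).2] using hivs))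
      refine le_trans ?_ hb
      refine Nat.cast_le.2 (Finset.card_le_card ?_)
      intro S hS
      rw [Finset.mem_filter] at hS ⊢
      refine ⟨hS.1, ?_⟩
      have h2 := hS.2
      rw [hcost S] at h2
      dsimp only at h2
      rw [if_pos hth] at h2
      split_ifs at h2 with huv
      · rw [hsub] at h2; exact absurd hcb h2
      · rw [Nat.cast_add, hsub, not_lt, hcbar, hm] at h2
        linarith
    · have hm : min θ (1 - θ) = 1 - θ := min_eq_right (by linarith)
      have hk1 : ((s - iu : ℕ) : ℝ) = s - iu := by
        rw [Nat.cast_sub (by omega)]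
      have hb := bad_bound splus s hs hss (fun i => - x i) g
        ((1 - θ) * ((splus:ℝ) - s) + 3 * g * splus / s) hg (s - iu)
        (by omega)
        (by rw [hk1]; exact arith_aux (1 - θ) s splus g _ hs' hss'.le hg (by linarith) (by linarith))
        (fun S => - kthSmallest (S.val.map x) iu) (by
          intro S hS
          simp only [neg_lt_neg_iff]
          rw [card_filter_map S x (fun a => kthSmallest (S.val.map x) iu < a)]
          have hc : (S.val.map x).card = s := by simpa using (Finset.mem_powersetCard.1 hS).2
          have := kth_gt (S.val.map x) iu (by omega) (by omega)
          rwa [hc] at this)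
      refine le_trans ?_ hb
      refine Nat.cast_le.2 (Finset.card_le_card ?_)
      intro S hS
      rw [Finset.mem_filter] at hS ⊢
      refine ⟨hS.1, ?_⟩
      have h2 := hS.2
      rw [hcost S] at h2
      dsimp only at h2
      rw [if_neg hth] at h2
      simp only [neg_lt_neg_iff]
      split_ifs at h2 with huv
      · rw [hsub] at h2; exact absurd hcb h2
      · rw [Nat.cast_add, hsub, not_lt, hcbar, hm] at h2
        linarith
  have hsplit : ((((Finset.univ : Finset (Fin splus)).powersetCard s).filter
            (fun S => ((cost S : ℝ) < cbar))).card : ℝ)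
      + ((((Finset.univ : Finset (Fin splus)).powersetCard s).filter
            (fun S => ¬ ((cost S : ℝ) < cbar))).card : ℝ) = splus.choose s := by
    rw [← hcard]
    exact_mod_cast Finset.card_filter_add_card_filter_not _
  have hcb0 : 0 ≤ cbar := by
    rw [hcbar]
    have : 0 ≤ 3 * g * (splus : ℝ) / (s : ℝ) := by positivity
    nlinarith
  have hmax : ∀ S ∈ (Finset.univ : Finset (Fin splus)).powersetCard s,
      (cost S : ℝ) ≤ 2 * ((splus : ℝ) - s) := by
    intro S hS
    have hSc : ((Finset.univ : Finset (Fin splus)) \ S).card = splus - s := by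
      rw [Finset.card_sdiff_of_subset (Finset.subset_univ _), (Finset.mem_powersetCard.1 hS).2]
      simp
    have : cost S ≤ 2 * (splus - s) := by
      rw [hcost S]
      dsimp only
      have c1 := Finset.card_filter_le ((Finset.univ : Finset (Fin splus)) \ S)
        (fun j => x j < kthSmallest (S.val.map x) iv)
      have c2 := Finset.card_filter_le ((Finset.univ : Finset (Fin splus)) \ S)
        (fun j => kthSmallest (S.val.map x) iu < x j)
      split_ifs <;> omega
    rw [← hsub]
    exact_mod_cast this
  rw [hcard]
  constructor
  · rw [le_div_iff₀ hC]
    linarith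
  · rw [div_le_iff₀ hC, ← Finset.sum_filter_add_sum_filter_not _ (fun S => (cost S : ℝ) < cbar)]
    have h1 := Finset.sum_le_card_nsmul (((Finset.univ : Finset (Fin splus)).powersetCard s).filter
            (fun S => ((cost S : ℝ) < cbar))) (fun S => (cost S : ℝ)) cbar
            (fun S hS => (Finset.mem_filter.1 hS).2.le)
    have h2 := Finset.sum_le_card_nsmul (((Finset.univ : Finset (Fin splus)).powersetCard s).filter
            (fun S => ¬ ((cost S : ℝ) < cbar))) (fun S => (cost S : ℝ)) (2 * ((splus : ℝ) - s))
            (fun S hS => hmax S (Finset.mem_filter.1 hS).1)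
    rw [nsmul_eq_mul] at h1 h2
    have h3 := mul_le_mul_of_nonneg_right hbad (by linarith : 0 ≤ 2 * ((splus : ℝ) - s))
    have h4 : ((((Finset.univ : Finset (Fin splus)).powersetCard s).filter
            (fun S => ((cost S : ℝ) < cbar))).card : ℝ) * cbar ≤ splus.choose s * cbar := by
      apply mul_le_mul_of_nonneg_right _ hcb0
      rw [← hsplit]
      linarith [Nat.cast_nonneg (α := ℝ) ((((Finset.univ : Finset (Fin splus)).powersetCard s).filter
            (fun S => ¬ ((cost S : ℝ) < cbar))).card)]
    linarith
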